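/- Let D ∈ ℝ^{m×n}, let Y ∈ ℝ^{n×n} be symmetric, let P ∈ ℝ^{n×n} be the matrix of the orthogonal projection onto ker D, and suppose P·Y·P is positive semidefinite with rank(P·Y·P) = rank(P·Y). Then the set C := {X ∈ ℝ^{m×m} : X symmetric, DᵀXD ⪯ Y} is nonempty and contains a maximal element X⋆ in the following sense: X⋆ ∈ C and for every X ∈ C one has DᵀXD ⪯ DᵀX⋆D ⪯ Y. -/

import Mathlib

/-!
Let `Z` solve `PYP Z = PY`; such a `Z` exists because the rank hypothesis forces
`range (PYP) = range (PY)`. The maximal value of `DᵀXD` is the generalized Schur complement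
`M = Y - Zᵀ(PYP)Z`, obtained by minimising the quadratic form of `Y` over the translates of `ker D`.
Indeed `Y - M = Zᵀ(PYP)Z` is positive semidefinite, and for a feasible `X` with
`N = Y - DᵀXD` one has `PN = PY`, whence `M - DᵀXD = (1 - PZ)ᵀ N (1 - PZ)`, which is positive
semidefinite as well.
It remains to write `M` as `DᵀX⋆D`. Since `PM = 0` and `M` is symmetric, it suffices to factor
`1 - P = L D` through `D`, which a generalized inverse of `D` provides; then `X⋆ = LᵀML`.
-/

open Matrix

noncomputable section

abbrev Vec (n : ℕ) := Fin n → ℝ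

/-- `P` is the matrix of the orthogonal projection onto the subspace `S`. -/
def IsOrthProjOnto {k : ℕ} (P : Matrix (Fin k) (Fin k) ℝ) (S : Submodule ℝ (Vec k)) : Prop :=
  P.IsSymm ∧ P * P = P ∧ LinearMap.range P.mulVecLin = S

/-- Invert `D` on its range and extend linearly to the whole codomain. -/
theorem exists_generalized_inverse {m n : ℕ} (D : Matrix (Fin m) (Fin n) ℝ) :
    ∃ G : Matrix (Fin n) (Fin m) ℝ, D * G * D = D := by
  obtain ⟨s, hs⟩ := D.mulVecLin.rangeRestrict.exists_rightInverse_of_surjective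
    (LinearMap.range_rangeRestrict _)
  obtain ⟨g, hg⟩ := s.exists_extend
  refine ⟨LinearMap.toMatrix' g, Matrix.ext_of_mulVec_single fun j => ?_⟩
  have h1 := congrArg Subtype.val
    (LinearMap.congr_fun hs (D.mulVecLin.rangeRestrict (Pi.single j 1)))
  have h2 := LinearMap.congr_fun hg (D.mulVecLin.rangeRestrict (Pi.single j 1))
  simp only [LinearMap.comp_apply, LinearMap.id_apply, Submodule.subtype_apply] at h1 h2
  rw [← h2] at h1
  rw [← Matrix.mulVec_mulVec, ← Matrix.mulVec_mulVec, LinearMap.toMatrix'_mulVec]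
  exact h1

/-- Equality of ranks makes the inclusion `range (A * B) ≤ range A` an equality, so the columns
of `A` are combinations of those of `A * B`. -/
theorem exists_mul_eq_of_rank_mul_eq {n : ℕ} (A B : Matrix (Fin n) (Fin n) ℝ)
    (h : (A * B).rank = A.rank) : ∃ Z : Matrix (Fin n) (Fin n) ℝ, A * B * Z = A := by
  have hle : LinearMap.range (A * B).mulVecLin ≤ LinearMap.range A.mulVecLin := by
    rw [Matrix.mulVecLin_mul]
    exact LinearMap.range_comp_le_range _ _
  have heq := Submodule.eq_of_le_of_finrank_eq hle h
  have hcol : ∀ j, ∃ z : Fin n → ℝ, (A * B) *ᵥ z = A *ᵥ Pi.single j 1 := fun j => by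
    have : A *ᵥ Pi.single j 1 ∈ LinearMap.range (A * B).mulVecLin := heq ▸ ⟨_, rfl⟩
    exact this
  choose z hz using hcol
  refine ⟨(Matrix.of z)ᵀ, Matrix.ext_of_mulVec_single fun j => ?_⟩
  rw [← Matrix.mulVec_mulVec, ← hz j]
  congr 1
  ext i
  simp

theorem lmi_maximal_solution {m n : ℕ} (D : Matrix (Fin m) (Fin n) ℝ)
    (Y : Matrix (Fin n) (Fin n) ℝ) (hY : Y.IsSymm)
    (P : Matrix (Fin n) (Fin n) ℝ)
    (hP : IsOrthProjOnto P (LinearMap.ker D.mulVecLin))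
    (hPSD : (P * Y * P).PosSemidef)
    (hrank : (P * Y * P).rank = (P * Y).rank) :
    ∃ Xs : Matrix (Fin m) (Fin m) ℝ, Xs.IsSymm ∧ (Y - Dᵀ * Xs * D).PosSemidef ∧
      ∀ X : Matrix (Fin m) (Fin m) ℝ, X.IsSymm → (Y - Dᵀ * X * D).PosSemidef →
        (Dᵀ * Xs * D - Dᵀ * X * D).PosSemidef := by
  obtain ⟨hPs, hPP, hPr⟩ := hP
  have hPt : Pᵀ = P := hPs
  have hYt : Yᵀ = Y := hY
  have hDP : D * P = 0 := Matrix.ext_of_mulVec_single fun j => by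
    have : P *ᵥ Pi.single j 1 ∈ LinearMap.ker D.mulVecLin := hPr ▸ ⟨_, rfl⟩
    rw [← Matrix.mulVec_mulVec, Matrix.zero_mulVec]
    exact this
  have hPD : P * Dᵀ = 0 := by
    simpa [Matrix.transpose_mul, hPt] using congrArg Matrix.transpose hDP
  have hPfix : ∀ A : Matrix (Fin n) (Fin n) ℝ, D * A = 0 → P * A = A := by
    intro A hA
    refine Matrix.ext_of_mulVec_single fun j => ?_
    have : A *ᵥ Pi.single j 1 ∈ LinearMap.range P.mulVecLin := by
      rw [hPr, LinearMap.mem_ker, Matrix.mulVecLin_apply, Matrix.mulVec_mulVec, hA,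
        Matrix.zero_mulVec]
    obtain ⟨w, hw⟩ := this
    rw [← Matrix.mulVec_mulVec, ← hw, Matrix.mulVecLin_apply, Matrix.mulVec_mulVec, hPP]
  obtain ⟨G, hG⟩ := exists_generalized_inverse D
  obtain ⟨Z, hZ⟩ := exists_mul_eq_of_rank_mul_eq (P * Y) P hrank
  have hZt : Zᵀ * (P * Y * P) = Y * P := by
    simpa [Matrix.transpose_mul, hPt, hYt, Matrix.mul_assoc] using congrArg Matrix.transpose hZ
  set M := Y - Zᵀ * (P * Y * P) * Z with hM
  have hMt : Mᵀ = M := by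
    simp [hM, Matrix.transpose_sub, Matrix.transpose_mul, hPt, hYt, Matrix.mul_assoc]
  have hMP : P * M = 0 := by
    rw [hM, hZt, Matrix.mul_sub, show P * (Y * P * Z) = P * Y * P * Z by
      simp only [Matrix.mul_assoc], hZ, sub_self]
  have hMP' : M * P = 0 := by
    simpa [Matrix.transpose_mul, hPt, hMt] using congrArg Matrix.transpose hMP
  -- `1 - G * D` maps into `ker D`, which `P` fixes, so `1 - P` kills it.
  have hLD : (1 - P) * G * D = 1 - P := by
    have h := hPfix (1 - G * D) (by rw [Matrix.mul_sub, ← Matrix.mul_assoc, hG]; simp)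
    rw [Matrix.mul_sub, Matrix.mul_one] at h
    rw [Matrix.mul_assoc, Matrix.sub_mul, Matrix.one_mul]
    rw [sub_eq_sub_iff_add_eq_add] at h
    rw [sub_eq_sub_iff_add_eq_add, add_comm, h, add_comm]
  have hX : Dᵀ * (((1 - P) * G)ᵀ * M * ((1 - P) * G)) * D = M := by
    calc _ = ((1 - P) * G * D)ᵀ * M * ((1 - P) * G * D) := by
          simp only [Matrix.transpose_mul, Matrix.mul_assoc]
      _ = M := by
          rw [hLD, Matrix.transpose_sub, Matrix.transpose_one, hPt, Matrix.sub_mul, hMP,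
            Matrix.one_mul, sub_zero, Matrix.mul_sub, hMP', Matrix.mul_one, sub_zero]
  refine ⟨((1 - P) * G)ᵀ * M * ((1 - P) * G), ?_, ?_, fun X _ hN => ?_⟩
  · show _ᵀ = _
    simp only [Matrix.transpose_mul, hMt, Matrix.transpose_transpose, Matrix.mul_assoc]
  · rw [hX, hM, sub_sub_cancel, ← Matrix.conjTranspose_eq_transpose_of_trivial]
    exact hPSD.conjTranspose_mul_mul_same Z
  · rw [hX]
    have h := hN.conjTranspose_mul_mul_same (1 - P * Z)
    rw [Matrix.conjTranspose_eq_transpose_of_trivial] at h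
    have hPN : P * (Y - Dᵀ * X * D) = P * Y := by
      rw [Matrix.mul_sub, ← Matrix.mul_assoc, ← Matrix.mul_assoc, hPD]
      simp
    have hNP : (Y - Dᵀ * X * D) * P = Y * P := by
      rw [Matrix.sub_mul, Matrix.mul_assoc, hDP]
      simp
    convert h using 1
    have e2 : (Y - Dᵀ * X * D) * (1 - P * Z) = (Y - Dᵀ * X * D) - Y * P * Z := by
      rw [Matrix.mul_sub, Matrix.mul_one, ← Matrix.mul_assoc, hNP]
    have e3 : P * (Y * P * Z) = P * Y := by
      rw [← hZ]; simp only [Matrix.mul_assoc]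
    rw [Matrix.mul_assoc (1 - P * Z)ᵀ, e2, Matrix.transpose_sub, Matrix.transpose_one, Matrix.transpose_mul,
      hPt, Matrix.sub_mul, Matrix.one_mul, Matrix.mul_assoc Zᵀ P, Matrix.mul_sub, hPN, e3, sub_self,
      Matrix.mul_zero, hM, hZt]
    abel
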